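/- arXiv:1307.0359 — 2 statements merged into one kernel-verified Lean document; each statement's English description precedes it below -/
import Mathlib

section
/- Lemma (single-branch variation estimate). Let [a,b] and [c,d] be nondegenerate compact intervals and let S : [a,b] → [c,d] be a C² bijection with S′(x) ≠ 0 for all x ∈ [a,b]. Set g = 1/|S′|, d₀ = sup_{x∈[a,b]} 1/|S′(x)| and 𝒞 = sup_{x∈[a,b]} |S″(x)|/|S′(x)|², assumed finite. Then for every function f : [a,b] → ℝ of bounded variation, V_{[c,d]}((f·g)∘S^{−1}) ≤ d₀·V_{[a,b]}(f) + 𝒞·∫_a^b |f(x)| dx. -/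
/-!
The inverse branch is monotone or antitone, so composing with it does not increase variation, and
it suffices to bound the variation of `f * g` on `[a, b]`, where `g = 1 / |S'|`. The function `g`
takes values in `[0, d₀]` and is `𝒞`-Lipschitz, since `(1 / S')' = -S'' / S'²`.

On a single interval `[x, y]` every `t ∈ [x, y]` gives
`f y g y - f x g x = g y (f y - f t) + f t (g y - g x) + g x (f t - f x)`, hence
`|f y g y - f x g x| ≤ d₀ V_{[x,y]}(f) + 𝒞 (y - x) |f t|`. Averaging over `t` turns the last term
into `𝒞 ∫_x^y |f|` (`dist_mul_le_variation_add_integral`). Both terms on the right are additive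
over adjacent intervals, so summing over a partition gives the estimate
(`eVariationOn_mul_le`).
-/

open MeasureTheory Set
open scoped ENNReal

/-- A function of bounded variation on `[a, b]` is a difference of monotone functions, hence
integrable. -/
lemma integrableOn_abs_of_eVariationOn_ne_top {a b : ℝ} {f : ℝ → ℝ}
    (hBV : eVariationOn f (Icc a b) ≠ ⊤) :
    IntegrableOn (fun x => |f x|) (Icc a b) := by
  obtain ⟨p, q, hp, hq, rfl⟩ :=
    (BoundedVariationOn.locallyBoundedVariationOn hBV).exists_monotoneOn_sub_monotoneOn
  exact ((hp.integrableOn_isCompact isCompact_Icc).sub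
    (hq.integrableOn_isCompact isCompact_Icc)).abs

/-- The estimate on a single interval, obtained by averaging over an intermediate point `t`. -/
lemma dist_mul_le_variation_add_integral {x y D C : ℝ} (hxy : x ≤ y) {f g : ℝ → ℝ}
    (hBV : eVariationOn f (Icc x y) ≠ ⊤)
    (hg0 : ∀ t ∈ Icc x y, 0 ≤ g t) (hgD : ∀ t ∈ Icc x y, g t ≤ D)
    (hgC : |g y - g x| ≤ C * (y - x)) :
    |f y * g y - f x * g x| ≤
      D * (eVariationOn f (Icc x y)).toReal + C * ∫ t in x..y, |f t| := by
  have hx : x ∈ Icc x y := left_mem_Icc.2 hxy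
  have hy : y ∈ Icc x y := right_mem_Icc.2 hxy
  have hD : 0 ≤ D := (hg0 x hx).trans (hgD x hx)
  rcases hxy.eq_or_lt with rfl | hlt
  · simp only [sub_self, abs_zero, intervalIntegral.integral_same, mul_zero, add_zero]
    positivity
  set V := (eVariationOn f (Icc x y)).toReal with hV
  have key : ∀ t ∈ Icc x y,
      |f y * g y - f x * g x| - D * V ≤ C * (y - x) * |f t| := by
    intro t ht
    have hsum : |f y - f t| + |f t - f x| ≤ V := by
      have h1 := eVariationOn.edist_le f (s := Icc x t) (left_mem_Icc.2 ht.1) (right_mem_Icc.2 ht.1)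
      have h2 := eVariationOn.edist_le f (s := Icc t y) (left_mem_Icc.2 ht.2) (right_mem_Icc.2 ht.2)
      have h3 := eVariationOn.Icc_add_Icc f (s := univ) ht.1 ht.2 (mem_univ t)
      simp only [univ_inter] at h3
      have h4 := ENNReal.toReal_mono hBV (h3 ▸ add_le_add h1 h2)
      rw [ENNReal.toReal_add (edist_ne_top _ _) (edist_ne_top _ _), ← dist_edist, ← dist_edist,
        Real.dist_eq, Real.dist_eq, abs_sub_comm (f x), abs_sub_comm (f t) (f y)] at h4
      linarith
    have e1 : |g y * (f y - f t)| ≤ D * |f y - f t| := by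
      rw [abs_mul, abs_of_nonneg (hg0 y hy)]
      exact mul_le_mul_of_nonneg_right (hgD y hy) (abs_nonneg _)
    have e2 : |g x * (f t - f x)| ≤ D * |f t - f x| := by
      rw [abs_mul, abs_of_nonneg (hg0 x hx)]
      exact mul_le_mul_of_nonneg_right (hgD x hx) (abs_nonneg _)
    have e3 : |f t * (g y - g x)| ≤ C * (y - x) * |f t| := by
      rw [abs_mul, mul_comm]
      exact mul_le_mul_of_nonneg_right hgC (abs_nonneg _)
    have e4 : f y * g y - f x * g x =
        g y * (f y - f t) + f t * (g y - g x) + g x * (f t - f x) := by ring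
    have e5 := abs_add_three (g y * (f y - f t)) (f t * (g y - g x)) (g x * (f t - f x))
    have e6 := mul_le_mul_of_nonneg_left hsum hD
    rw [e4]
    linarith
  have hint : IntervalIntegrable (fun t => |f t|) volume x y :=
    (intervalIntegrable_iff_integrableOn_Icc_of_le hxy).2
      (integrableOn_abs_of_eVariationOn_ne_top hBV)
  have hmono := intervalIntegral.integral_mono_on hxy
    (intervalIntegrable_const (c := |f y * g y - f x * g x| - D * V))
    (hint.const_mul (C * (y - x))) key
  rw [intervalIntegral.integral_const, intervalIntegral.integral_const_mul, smul_eq_mul] at hmono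
  have : |f y * g y - f x * g x| - D * V ≤ C * ∫ t in x..y, |f t| := by
    refine le_of_mul_le_mul_left ?_ (sub_pos.2 hlt)
    linarith
  linarith

/-- Variation of a product with a bounded nonnegative Lipschitz weight. -/
lemma eVariationOn_mul_le {a b D C : ℝ} {f g : ℝ → ℝ}
    (hBV : eVariationOn f (Icc a b) ≠ ⊤) (hD : 0 ≤ D) (hC : 0 ≤ C)
    (hg0 : ∀ t ∈ Icc a b, 0 ≤ g t) (hgD : ∀ t ∈ Icc a b, g t ≤ D)
    (hgC : ∀ x ∈ Icc a b, ∀ y ∈ Icc a b, |g y - g x| ≤ C * |y - x|) :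
    eVariationOn (fun x => f x * g x) (Icc a b) ≤
      ENNReal.ofReal (D * (eVariationOn f (Icc a b)).toReal + C * ∫ x in Icc a b, |f x|) := by
  refine iSup_le fun p => ?_
  obtain ⟨n, u, hu, hus⟩ := p
  have hsub : ∀ i j, Icc (u i) (u j) ⊆ Icc a b := fun i j =>
    Icc_subset_Icc (hus i).1 (hus j).2
  have hfin : ∀ i j, eVariationOn f (Icc (u i) (u j)) ≠ ⊤ := fun i j =>
    ne_top_of_le_ne_top hBV (eVariationOn.mono f (hsub i j))
  have hInt := integrableOn_abs_of_eVariationOn_ne_top hBV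
  have hstep : ∀ i, edist (f (u (i + 1)) * g (u (i + 1))) (f (u i) * g (u i)) ≤
      ENNReal.ofReal (D * (eVariationOn f (Icc (u i) (u (i + 1)))).toReal +
        C * ∫ t in u i..u (i + 1), |f t|) := by
    intro i
    have hle : u i ≤ u (i + 1) := hu i.le_succ
    rw [edist_dist, Real.dist_eq]
    refine ENNReal.ofReal_le_ofReal (dist_mul_le_variation_add_integral hle (hfin _ _)
      (fun t ht => hg0 t (hsub _ _ ht)) (fun t ht => hgD t (hsub _ _ ht)) ?_)
    have := hgC _ (hus i) _ (hus (i + 1))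
    rwa [abs_of_nonneg (sub_nonneg.2 hle)] at this
  refine (Finset.sum_le_sum fun i _ => hstep i).trans ?_
  rw [← ENNReal.ofReal_sum_of_nonneg]
  swap
  · intro i _
    have : 0 ≤ ∫ t in u i..u (i + 1), |f t| :=
      intervalIntegral.integral_nonneg (hu i.le_succ) fun _ _ => abs_nonneg _
    positivity
  refine ENNReal.ofReal_le_ofReal ?_
  rw [Finset.sum_add_distrib, ← Finset.mul_sum, ← Finset.mul_sum,
    ← ENNReal.toReal_sum fun i _ => hfin _ _, eVariationOn.sum' f hu,
    intervalIntegral.sum_integral_adjacent_intervals fun i _ =>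
      (intervalIntegrable_iff_integrableOn_Icc_of_le (hu i.le_succ)).2
        (hInt.mono_set (hsub _ _)),
    intervalIntegral.integral_of_le (hu (Nat.zero_le n))]
  refine add_le_add (mul_le_mul_of_nonneg_left (ENNReal.toReal_mono hBV
    (eVariationOn.mono f (hsub _ _))) hD) (mul_le_mul_of_nonneg_left ?_ hC)
  exact setIntegral_mono_set hInt (Filter.Eventually.of_forall fun _ => abs_nonneg _)
    (Ioc_subset_Icc_self.trans (hsub _ _)).eventuallyLE

/-- **Lemma (single-branch variation estimate).**
Let `[a,b]` and `[c,d]` be nondegenerate compact intervals and `S : [a,b] → [c,d]` a `C²`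
bijection with nonvanishing derivative.  Set `g = 1/|S′|`, let `d₀` bound `1/|S′|` and
`𝒞` bound `|S″|/|S′|²` on `[a,b]` (the suprema being finite).  Then for every function
`f : [a,b] → ℝ` of bounded variation,
`V_{[c,d]}((f·g) ∘ S⁻¹) ≤ d₀ · V_{[a,b]}(f) + 𝒞 · ∫_a^b |f|`. -/
theorem single_branch_variation_estimate
    (a b c d : ℝ) (hab : a < b) (hcd : c < d)
    (S : ℝ → ℝ) (hS : ContDiffOn ℝ 2 S (Icc a b))
    (hbij : Set.BijOn S (Icc a b) (Icc c d))
    (hS' : ∀ x ∈ Icc a b, derivWithin S (Icc a b) x ≠ 0)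
    (d₀ 𝒞 : ℝ)
    (hd₀ : ∀ x ∈ Icc a b, |derivWithin S (Icc a b) x|⁻¹ ≤ d₀)
    (h𝒞 : ∀ x ∈ Icc a b,
      |derivWithin (derivWithin S (Icc a b)) (Icc a b) x| / (derivWithin S (Icc a b) x) ^ 2 ≤ 𝒞)
    (Sinv : ℝ → ℝ) (hSinv : ∀ x ∈ Icc a b, Sinv (S x) = x)
    (f : ℝ → ℝ) (hBV : eVariationOn f (Icc a b) ≠ ⊤) :
    eVariationOn (fun y => f (Sinv y) * |derivWithin S (Icc a b) (Sinv y)|⁻¹) (Icc c d) ≤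
      ENNReal.ofReal (d₀ * (eVariationOn f (Icc a b)).toReal + 𝒞 * ∫ x in Icc a b, |f x|) := by
  have ha : a ∈ Icc a b := left_mem_Icc.2 hab.le
  have hD : 0 ≤ d₀ := (by positivity : (0 : ℝ) ≤ _).trans (hd₀ a ha)
  have hC : 0 ≤ 𝒞 := (by positivity : (0 : ℝ) ≤ _).trans (h𝒞 a ha)
  have hmaps : MapsTo Sinv (Icc c d) (Icc a b) := by
    intro y hy
    obtain ⟨x, hx, rfl⟩ := hbij.surjOn hy
    rwa [hSinv x hx]
  have hdiff : DifferentiableOn ℝ (derivWithin S (Icc a b)) (Icc a b) :=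
    (hS.derivWithin (m := 1) (uniqueDiffOn_Icc hab) (by norm_num)).differentiableOn (by norm_num)
  -- The Lipschitz bound is proved for `1 / S'` and passes to the absolute value.
  have hlip : ∀ x ∈ Icc a b, ∀ y ∈ Icc a b,
      |(|derivWithin S (Icc a b) y|⁻¹) - |derivWithin S (Icc a b) x|⁻¹| ≤ 𝒞 * |y - x| := by
    intro x hx y hy
    have h := (convex_Icc a b).norm_image_sub_le_of_norm_hasDerivWithin_le (C := 𝒞)
      (fun z hz => (hdiff z hz).hasDerivWithinAt.inv (hS' z hz))
      (fun z hz => by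
        rw [Real.norm_eq_abs, abs_div, abs_neg, abs_of_nonneg (sq_nonneg (derivWithin S _ z))]
        exact h𝒞 z hz) hx hy
    rw [← abs_inv, ← abs_inv]
    exact (abs_abs_sub_abs_le_abs_sub _ _).trans h
  refine le_trans ?_ (eVariationOn_mul_le (g := fun x => |derivWithin S (Icc a b) x|⁻¹)
    hBV hD hC (fun t _ => by positivity) hd₀ hlip)
  rcases hS.continuousOn.strictMonoOn_of_injOn_Icc' hab.le hbij.injOn with hm | hm
  · refine eVariationOn.comp_le_of_monotoneOn (fun x => f x * |derivWithin S (Icc a b) x|⁻¹) Sinv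
      ?_ hmaps
    intro y hy z hz hyz
    obtain ⟨x, hx, rfl⟩ := hbij.surjOn hy
    obtain ⟨w, hw, rfl⟩ := hbij.surjOn hz
    rw [hSinv x hx, hSinv w hw]
    exact (hm.le_iff_le hx hw).1 hyz
  · refine eVariationOn.comp_le_of_antitoneOn (fun x => f x * |derivWithin S (Icc a b) x|⁻¹) Sinv
      ?_ hmaps
    intro y hy z hz hyz
    obtain ⟨x, hx, rfl⟩ := hbij.surjOn hy
    obtain ⟨w, hw, rfl⟩ := hbij.surjOn hz
    rw [hSinv x hx, hSinv w hw]
    exact (hm.le_iff_ge hx hw).1 hyz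
end

section
/- Lemma (positivity sets of nonnegative quasi-Hölder functions are almost open). Let X̂ ⊂ ℝ^m be a Borel set of finite positive Lebesgue measure, α ∈ (0,1) and ε₀ > 0. If f ∈ L¹(X̂,ν̂) is nonnegative and satisfies |f|_B < ∞, then the set {f > 0} is almost open with respect to ν̂: for ν̂-almost every x with f(x) > 0 there is an open neighborhood V of x such that ν̂(V ∖ {f > 0}) = 0. -/
/-!
Write `U = {f > 0}` and let `N` be the support of `ν̂` restricted to `Uᶜ`. The set `Nᶜ` is open and
`ν̂ (Nᶜ \ U) = 0`, so it serves as the neighbourhood of each of its points, and it remains to show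
that almost every point of `N` has `f = 0`.

If `x ∈ N`, then `f` vanishes on a non-null part of every ball `B_ε(x)`; on the other hand, for
almost every `x` and every `q < f x`, the set `{f > q}` also meets `B_ε(x)` in a non-null set
(`ae_forall_mem_support`). Hence `f x ≤ osc (f, B_ε(x))` for almost every `x ∈ N`
(`ofReal_le_eosc`). Integrating, `∫_N f dν̂ ≤ ε ^ α |f|_B` for all `ε ∈ (0, ε₀]`, and `ε → 0` gives
`∫_N f dν̂ = 0`.
-/

open MeasureTheory Metric Set Filter
open scoped ENNReal NNReal

noncomputable section

abbrev Eu (m : ℕ) := EuclideanSpace ℝ (Fin m)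

/-- Essential oscillation of `f` over a set `Ω` (the essential diameter of the values of `f`
on `Ω`, which equals `esssup f - essinf f` on `Ω`). -/
def eosc {m : ℕ} (f : Eu m → ℝ) (Ω : Set (Eu m)) : ℝ≥0∞ :=
  sInf {C : ℝ≥0∞ | ∀ᵐ x ∂(volume.restrict Ω), ∀ᵐ y ∂(volume.restrict Ω), edist (f x) (f y) ≤ C}

/-- The normalized Lebesgue measure on `Xhat`. -/
def nuhat {m : ℕ} (Xhat : Set (Eu m)) : Measure (Eu m) :=
  (volume Xhat)⁻¹ • volume.restrict Xhat

/-- The quasi-Hölder seminorm `|f|_B = sup_{0<ε≤ε₀} ε^{-α} ∫ osc(f, B_ε(x)) dν̂(x)`. -/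
def qhSemi {m : ℕ} (Xhat : Set (Eu m)) (α ε₀ : ℝ) (f : Eu m → ℝ) : ℝ≥0∞ :=
  ⨆ ε ∈ Set.Ioc (0:ℝ) ε₀,
    ENNReal.ofReal (ε ^ (-α)) * ∫⁻ x, eosc f (ball x ε) ∂(nuhat Xhat)

/-- The quasi-Hölder norm `‖f‖_B = ‖f‖_{L¹(ν̂)} + |f|_B`. -/
def qhNorm {m : ℕ} (Xhat : Set (Eu m)) (α ε₀ : ℝ) (f : Eu m → ℝ) : ℝ :=
  (∫ x, |f x| ∂(nuhat Xhat)) + (qhSemi Xhat α ε₀ f).toReal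

/-- A set `U ⊆ Xhat` is almost open with respect to `ν̂` if for `ν̂`-a.e. `x ∈ U` there is an
open neighborhood `V` of `x` with `ν̂(V ∖ U) = 0`. -/
def AlmostOpen {m : ℕ} (νh : Measure (Eu m)) (U : Set (Eu m)) : Prop :=
  ∀ᵐ x ∂νh, x ∈ U → ∃ V : Set (Eu m), IsOpen V ∧ x ∈ V ∧ νh (V \ U) = 0

/-- Almost every `x` lies in the support of Lebesgue measure on each rational superlevel set
`{f > q}` containing `x`. No measurability of `f` is needed. -/
lemma ae_forall_mem_support {m : ℕ} (f : Eu m → ℝ) :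
    ∀ᵐ x, ∀ q : ℚ, (q : ℝ) < f x →
      x ∈ (volume.restrict {y | (q : ℝ) < f y}).support := by
  rw [ae_all_iff]
  intro q
  have h := Measure.measure_compl_support (μ := volume.restrict {y : Eu m | (q : ℝ) < f y})
  rw [Measure.restrict_apply Measure.isClosed_support.measurableSet.compl] at h
  rw [ae_iff]
  refine measure_mono_null ?_ h
  intro x hx
  simp only [mem_ofPred_eq, Classical.not_imp] at hx
  exact ⟨hx.2, hx.1⟩

/-- If both `{f ≤ 0}` and every rational superlevel set `{f > q}` with `q < a` meet the ball in a
non-null set, then the essential oscillation over the ball is at least `a`. -/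
lemma ofReal_le_eosc {m : ℕ} (f : Eu m → ℝ) (x : Eu m) (ε a : ℝ)
    (h0 : volume (ball x ε ∩ {y | f y ≤ 0}) ≠ 0)
    (h1 : ∀ q : ℚ, (q : ℝ) < a → volume (ball x ε ∩ {y | (q : ℝ) < f y}) ≠ 0) :
    ENNReal.ofReal a ≤ eosc f (ball x ε) := by
  refine le_sInf ?_
  intro C hC
  rw [mem_ofPred_eq, ae_restrict_iff' measurableSet_ball] at hC
  obtain ⟨z, ⟨hzB, hz0⟩, hz⟩ : ∃ z ∈ ball x ε ∩ {y | f y ≤ 0},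
      ∀ᵐ y ∂(volume.restrict (ball x ε)), edist (f z) (f y) ≤ C := by
    obtain ⟨z, hzs, hz⟩ := ((frequently_ae_mem_iff.2 h0).and_eventually hC).exists
    exact ⟨z, hzs, hz hzs.1⟩
  rw [ae_restrict_iff' measurableSet_ball] at hz
  have key : ∀ q : ℚ, (q : ℝ) < a → ENNReal.ofReal q ≤ C := by
    intro q hq
    obtain ⟨y, ⟨hyB, hyq⟩, hy⟩ : ∃ y ∈ ball x ε ∩ {y | (q : ℝ) < f y},
        edist (f z) (f y) ≤ C := by
      obtain ⟨y, hys, hy⟩ := ((frequently_ae_mem_iff.2 (h1 q hq)).and_eventually hz).exists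
      exact ⟨y, hys, hy hys.1⟩
    refine le_trans ?_ hy
    rw [edist_dist, Real.dist_eq]
    refine ENNReal.ofReal_le_ofReal ?_
    simp only [mem_ofPred_eq] at hz0 hyq
    have := neg_abs_le (f z - f y)
    linarith
  by_contra! hlt
  have hCtop : C ≠ ⊤ := hlt.ne_top
  obtain ⟨q, hq1, hq2⟩ := exists_rat_btwn ((ENNReal.lt_ofReal_iff_toReal_lt hCtop).1 hlt)
  exact absurd ((ENNReal.lt_ofReal_iff_toReal_lt hCtop).2 hq1) (key q hq2).not_gt

/-- The integrated oscillation at scale `ε ≤ ε₀` is at most `ε ^ α |f|_B`. -/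
lemma lintegral_eosc_le {m : ℕ} (Xhat : Set (Eu m)) (α ε₀ : ℝ) (f : Eu m → ℝ)
    {ε : ℝ} (hε : ε ∈ Set.Ioc (0:ℝ) ε₀) :
    ∫⁻ x, eosc f (ball x ε) ∂(nuhat Xhat)
      ≤ ENNReal.ofReal (ε ^ α) * qhSemi Xhat α ε₀ f := by
  have h : ENNReal.ofReal (ε ^ (-α)) * ∫⁻ x, eosc f (ball x ε) ∂(nuhat Xhat)
      ≤ qhSemi Xhat α ε₀ f :=
    le_iSup₂ (f := fun ε (_ : ε ∈ Set.Ioc (0:ℝ) ε₀) =>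
      ENNReal.ofReal (ε ^ (-α)) * ∫⁻ x, eosc f (ball x ε) ∂(nuhat Xhat)) ε hε
  have h1 : ENNReal.ofReal (ε ^ α) * ENNReal.ofReal (ε ^ (-α)) = 1 := by
    rw [← ENNReal.ofReal_mul (Real.rpow_nonneg hε.1.le _), ← Real.rpow_add hε.1]
    simp
  calc _ = ENNReal.ofReal (ε ^ α) *
        (ENNReal.ofReal (ε ^ (-α)) * ∫⁻ x, eosc f (ball x ε) ∂(nuhat Xhat)) := by
        rw [← mul_assoc, h1, one_mul]
    _ ≤ _ := by gcongr

/-- **Lemma (positivity sets of nonnegative quasi-Hölder functions are almost open).**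
Let `Xhat ⊂ ℝ^m` be a Borel set of finite positive Lebesgue measure, `α ∈ (0,1)` and `ε₀ > 0`.
If `f ∈ L¹(Xhat, ν̂)` is nonnegative and satisfies `|f|_B < ∞`, then `{f > 0}` is almost open
with respect to `ν̂`. -/
theorem quasiHolder_positivity_set_almost_open
    {m : ℕ} (Xhat : Set (Eu m)) (hmeas : MeasurableSet Xhat)
    (hpos : 0 < volume Xhat) (hfin : volume Xhat < ⊤)
    (α ε₀ : ℝ) (hα : α ∈ Set.Ioo (0:ℝ) 1) (hε₀ : 0 < ε₀)
    (f : Eu m → ℝ) (hint : Integrable f (nuhat Xhat)) (hsupp : ∀ x ∉ Xhat, f x = 0)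
    (hnonneg : ∀ x, 0 ≤ f x) (hqh : qhSemi Xhat α ε₀ f < ⊤) :
    AlmostOpen (nuhat Xhat) {x | 0 < f x} := by
  have hac : nuhat Xhat ≪ volume :=
    Measure.smul_absolutelyContinuous.trans Measure.restrict_le_self.absolutelyContinuous
  set N : Set (Eu m) := ((nuhat Xhat).restrict {x | 0 < f x}ᶜ).support with hN
  have hNclosed : IsClosed N := Measure.isClosed_support
  have hle : ∀ ε ∈ Set.Ioc (0:ℝ) ε₀,
      ∫⁻ x, N.indicator (fun x => ENNReal.ofReal (f x)) x ∂(nuhat Xhat)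
        ≤ ENNReal.ofReal (ε ^ α) * qhSemi Xhat α ε₀ f := by
    intro ε hε
    refine le_trans (lintegral_mono_ae ?_) (lintegral_eosc_le Xhat α ε₀ f hε)
    filter_upwards [hac.ae_le (ae_forall_mem_support f)] with x hx
    by_cases hxN : x ∈ N
    · rw [indicator_of_mem hxN]
      have hball : ball x ε ∈ nhds x := ball_mem_nhds x hε.1
      refine ofReal_le_eosc f x ε (f x) ?_ ?_
      · have h := (Measure.mem_support_iff_forall x).1 hxN _ hball
        rw [Measure.restrict_apply measurableSet_ball] at h
        intro h0
        refine h.ne' (hac ?_)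
        simpa [compl_ofPred] using h0
      · intro q hq
        have h := (Measure.mem_support_iff_forall x).1 (hx q hq) _ hball
        rw [Measure.restrict_apply measurableSet_ball] at h
        exact h.ne'
    · simp [indicator_of_notMem hxN]
  have hzero : ∫⁻ x, N.indicator (fun x => ENNReal.ofReal (f x)) x ∂(nuhat Xhat) = 0 := by
    have hlim : Tendsto (fun ε : ℝ => ENNReal.ofReal (ε ^ α) * qhSemi Xhat α ε₀ f)
        (nhdsWithin 0 (Set.Ioi 0)) (nhds 0) := by
      have h1 : Tendsto (fun ε : ℝ => ε ^ α) (nhdsWithin 0 (Set.Ioi 0)) (nhds 0) := by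
        have := (Real.continuousAt_rpow_const 0 α (Or.inr hα.1.le)).tendsto
        rw [Real.zero_rpow hα.1.ne'] at this
        exact this.mono_left nhdsWithin_le_nhds
      have h2 := ENNReal.Tendsto.mul_const (b := qhSemi Xhat α ε₀ f)
        (ENNReal.tendsto_ofReal h1) (Or.inr hqh.ne)
      simpa using h2
    refine le_antisymm (ge_of_tendsto hlim ?_) zero_le
    filter_upwards [Ioc_mem_nhdsGT hε₀] with ε hε using hle ε hε
  have hgm : AEMeasurable (N.indicator (fun x => ENNReal.ofReal (f x))) (nuhat Xhat) :=
    hint.1.aemeasurable.ennreal_ofReal.indicator hNclosed.measurableSet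
  rw [lintegral_eq_zero_iff' hgm] at hzero
  filter_upwards [hzero] with x hx hxU
  refine ⟨Nᶜ, hNclosed.isOpen_compl, ?_, ?_⟩
  · intro hxN
    rw [indicator_of_mem hxN] at hx
    exact absurd (ENNReal.ofReal_eq_zero.1 hx) (not_le.2 hxU)
  · have h := Measure.measure_compl_support (μ := (nuhat Xhat).restrict {x | 0 < f x}ᶜ)
    rwa [Measure.restrict_apply hNclosed.measurableSet.compl] at h

end
end
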